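/- A hermitian module M ⊆ ℝ[x,y] is archimedean if and only if c − ‖z‖² ∈ M for some real number c, where ‖z‖² := |z_1|² + ⋯ + |z_n|². -/

import Mathlib

open MvPolynomial Complex Matrix MeasureTheory ComplexOrder

noncomputable section

universe u

/-- `ℂ[z,z̄]`: the polynomial ring in the `2n` variables `z_j` (encoded `Sum.inl j`)
and `z̄_j` (encoded `Sum.inr j`). -/
abbrev CPoly (n : ℕ) := MvPolynomial (Fin n ⊕ Fin n) ℂ

/-- The involution `f ↦ f*`: conjugate the coefficients and swap `z_j ↔ z̄_j`. -/
def hermStar (n : ℕ) : CPoly n →+* CPoly n :=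
  (MvPolynomial.rename (Sum.swap : Fin n ⊕ Fin n → Fin n ⊕ Fin n)).toRingHom.comp
    (MvPolynomial.map (starRingEnd ℂ))

/-- The inclusion of the holomorphic polynomials `ℂ[z]` into `ℂ[z,z̄]`. -/
def hol (n : ℕ) : MvPolynomial (Fin n) ℂ →ₐ[ℂ] CPoly n :=
  MvPolynomial.rename Sum.inl

/-- Evaluation `f(a,b)` (substituting `a` for `z` and `b` for `z̄`). -/
def evalPair {n : ℕ} (a b : Fin n → ℂ) (f : CPoly n) : ℂ :=
  MvPolynomial.eval (Sum.elim a b) f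

/-- Evaluation `f(a) := f(a, ā)`. -/
def evalAt {n : ℕ} (a : Fin n → ℂ) (f : CPoly n) : ℂ :=
  evalPair a (fun j => (starRingEnd ℂ) (a j)) f

/-- `‖z‖² = |z_1|² + ⋯ + |z_n|²`. -/
def normZ (n : ℕ) : CPoly n := ∑ j : Fin n, X (Sum.inl j) * X (Sum.inr j)

/-- `Σ_h`: hermitian sums of squares `∑ |p_i|²`, `p_i ∈ ℂ[z]` holomorphic. -/
def SigmaH (n : ℕ) : Set (CPoly n) :=
  {f | ∃ (k : ℕ) (p : Fin k → MvPolynomial (Fin n) ℂ),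
    f = ∑ i, hol n (p i) * hermStar n (hol n (p i))}

/-- `Σ`: sums of squares `∑ |p_i|²`, `p_i ∈ ℂ[z,z̄]`. -/
def SigmaFull (n : ℕ) : Set (CPoly n) :=
  {f | ∃ (k : ℕ) (p : Fin k → CPoly n), f = ∑ i, p i * hermStar n (p i)}

/-- Ideals `I ⊆ ℝ[x,y]`, viewed as sets of `*`-fixed elements of `ℂ[z,z̄]`. -/
def IsRealIdeal (n : ℕ) (I : Set (CPoly n)) : Prop :=
  (∀ f ∈ I, hermStar n f = f) ∧ (0 : CPoly n) ∈ I ∧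
    (∀ f ∈ I, ∀ g ∈ I, f + g ∈ I) ∧
    ∀ f : CPoly n, hermStar n f = f → ∀ g ∈ I, f * g ∈ I

/-- The semiring `Σ_h + I`. -/
def SigmaHPlus (n : ℕ) (I : Set (CPoly n)) : Set (CPoly n) :=
  {f | ∃ s ∈ SigmaH n, ∃ g ∈ I, f = s + g}

/-- The real zero set `V_ℝ(I) ⊆ ℂⁿ`. -/
def VR (n : ℕ) (I : Set (CPoly n)) : Set (Fin n → ℂ) :=
  {a | ∀ f ∈ I, evalAt a f = 0}

/-- A subset `M` of `ℝ[x,y]` is archimedean if for every real `f` there is `c ∈ ℝ`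
with `c ± f ∈ M`. -/
def IsArchSet (n : ℕ) (M : Set (CPoly n)) : Prop :=
  ∀ f : CPoly n, hermStar n f = f →
    ∃ c : ℝ, (C (c : ℂ) + f) ∈ M ∧ (C (c : ℂ) - f) ∈ M

/-- Hermitian modules in `ℝ[x,y]`. -/
def IsHermitianModule (n : ℕ) (M : Set (CPoly n)) : Prop :=
  (∀ f ∈ M, hermStar n f = f) ∧ (1 : CPoly n) ∈ M ∧
    (∀ f ∈ M, ∀ g ∈ M, f + g ∈ M) ∧
    ∀ s ∈ SigmaH n, ∀ f ∈ M, s * f ∈ M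

/-- The closed set `X_M ⊆ ℂⁿ` associated with a hermitian module. -/
def XM (n : ℕ) (M : Set (CPoly n)) : Set (Fin n → ℂ) :=
  {a | ∀ g ∈ M, 0 ≤ (evalAt a g).re}

/-- Hereditary calculus `ψ_T` for a tuple of bounded operators:
`ψ_T(z^α z̄^β) = T^{*β} T^α` (adjoints to the left). -/
def psiOp {n : ℕ} {E : Type u} [NormedAddCommGroup E] [InnerProductSpace ℂ E]
    [CompleteSpace E] (T : Fin n → E →L[ℂ] E) (f : CPoly n) : E →L[ℂ] E :=
  ∑ m ∈ f.support, f.coeff m •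
    ((List.ofFn fun j => (ContinuousLinearMap.adjoint (T j)) ^ (m (Sum.inr j))).prod *
     (List.ofFn fun j => (T j) ^ (m (Sum.inl j))).prod)

/-- Hereditary calculus `ψ_T` for a tuple of matrices. -/
def psiMat {n m : ℕ} (T : Fin n → Matrix (Fin m) (Fin m) ℂ) (f : CPoly n) :
    Matrix (Fin m) (Fin m) ℂ :=
  ∑ mo ∈ f.support, f.coeff mo •
    ((List.ofFn fun j => ((T j)ᴴ) ^ (mo (Sum.inr j))).prod *
     (List.ofFn fun j => (T j) ^ (mo (Sum.inl j))).prod)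

/-- A commuting tuple `T` on a Hilbert space `E` is subnormal if it extends to a
commuting tuple of bounded normal operators on a larger Hilbert space `E'`,
leaving (the image of) `E` invariant. -/
def IsSubnormal {n : ℕ} {E : Type u} [NormedAddCommGroup E] [InnerProductSpace ℂ E]
    [CompleteSpace E] (T : Fin n → E →L[ℂ] E) : Prop :=
  ∃ (E' : Type u) (_ : NormedAddCommGroup E') (_ : InnerProductSpace ℂ E')
    (_ : CompleteSpace E') (ι : E →ₗᵢ[ℂ] E') (N : Fin n → E' →L[ℂ] E'),
      (∀ i j, Commute (N i) (N j)) ∧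
      (∀ j, Commute (N j) (ContinuousLinearMap.adjoint (N j))) ∧
      ∀ j x, N j (ι x) = ι (T j x)

/-- The "diamond" ideal `I(a,b)`. -/
def Iab {n : ℕ} (a b : Fin n → ℂ) : Set (CPoly n) :=
  {f | evalPair a (fun j => (starRingEnd ℂ) (a j)) f = 0 ∧
       evalPair a (fun j => (starRingEnd ℂ) (b j)) f = 0 ∧
       evalPair b (fun j => (starRingEnd ℂ) (a j)) f = 0 ∧
       evalPair b (fun j => (starRingEnd ℂ) (b j)) f = 0}

/-- The degenerate ideal `J(a,U)`. -/
def Jau {n : ℕ} (a : Fin n → ℂ) (U : Matrix (Fin n) (Fin n) ℂ) : Set (CPoly n) :=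
  {f | evalAt a f = 0 ∧
    U.mulVec (fun k => evalAt a (pderiv (Sum.inl k) f)) = 0 ∧
    (U.map (starRingEnd ℂ)).mulVec (fun k => evalAt a (pderiv (Sum.inr k) f)) = 0 ∧
    Matrix.trace
      (U * Matrix.of fun j k => evalAt a (pderiv (Sum.inr k) (pderiv (Sum.inl j) f))) = 0}

theorem hs_C (n : ℕ) (a : ℂ) : hermStar n (C a) = C ((starRingEnd ℂ) a) := by
  simp [hermStar]

theorem hs_inl (n : ℕ) (j : Fin n) : hermStar n (X (Sum.inl j)) = X (Sum.inr j) := by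
  simp [hermStar]

theorem hs_inr (n : ℕ) (j : Fin n) : hermStar n (X (Sum.inr j)) = X (Sum.inl j) := by
  simp [hermStar]

theorem hs_hs (n : ℕ) (f : CPoly n) : hermStar n (hermStar n f) = f := by
  induction f using MvPolynomial.induction_on with
  | C a => simp [hs_C]
  | add p q hp hq => simp [hp, hq]
  | mul_X p j hp => cases j <;> simp [hp, hs_inl, hs_inr]

theorem hol_C (n : ℕ) (a : ℂ) : hol n (C a) = C a := by simp [hol]

theorem hol_X (n : ℕ) (j : Fin n) : hol n (X j) = X (Sum.inl j) := by simp [hol]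

theorem sq_mem (n : ℕ) (p : MvPolynomial (Fin n) ℂ) :
    hol n p * hermStar n (hol n p) ∈ SigmaH n := ⟨1, fun _ => p, by simp⟩

section
variable {n : ℕ} {M : Set (CPoly n)}

theorem M_sq_mul (hM : IsHermitianModule n M) (p : MvPolynomial (Fin n) ℂ) {f : CPoly n}
    (hf : f ∈ M) : hol n p * hermStar n (hol n p) * f ∈ M :=
  hM.2.2.2 _ (sq_mem n p) f hf

theorem M_sq (hM : IsHermitianModule n M) (p : MvPolynomial (Fin n) ℂ) :
    hol n p * hermStar n (hol n p) ∈ M := by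
  simpa using M_sq_mul hM p hM.2.1

theorem M_smul (hM : IsHermitianModule n M) {r : ℝ} (hr : 0 ≤ r) {f : CPoly n}
    (hf : f ∈ M) : C (r : ℂ) * f ∈ M := by
  have h := M_sq_mul hM (C ((Real.sqrt r : ℝ) : ℂ)) hf
  rw [hol_C, hs_C, ← C_mul, Complex.conj_ofReal, ← Complex.ofReal_mul,
    Real.mul_self_sqrt hr] at h
  exact h

theorem M_const (hM : IsHermitianModule n M) {r : ℝ} (hr : 0 ≤ r) : C (r : ℂ) ∈ M := by
  simpa using M_smul hM hr hM.2.1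

theorem M_zero (hM : IsHermitianModule n M) : (0 : CPoly n) ∈ M := by
  simpa using M_const hM le_rfl

theorem M_sum (hM : IsHermitianModule n M) (s : Finset (Fin n)) (f : Fin n → CPoly n)
    (hf : ∀ j, f j ∈ M) : ∑ j ∈ s, f j ∈ M := by
  induction s using Finset.induction_on with
  | empty => simpa using M_zero hM
  | insert a s ha ih =>
    rw [Finset.sum_insert ha]
    exact hM.2.2.1 _ (hf a) _ ih

theorem M_coord (hM : IsHermitianModule n M) {c : ℝ} (hc : C (c : ℂ) - normZ n ∈ M)
    (j : Fin n) : C (c : ℂ) - X (Sum.inl j) * X (Sum.inr j) ∈ M := by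
  have h1 : ∀ k : Fin n, (X (Sum.inl k) * X (Sum.inr k) : CPoly n) ∈ M := fun k => by
    simpa [hol_X, hs_inl] using M_sq hM (X k)
  have h2 := hM.2.2.1 _ hc _ (M_sum hM (Finset.univ.erase j) _ h1)
  have h3 : normZ n = X (Sum.inl j) * X (Sum.inr j) +
      ∑ k ∈ Finset.univ.erase j, X (Sum.inl k) * X (Sum.inr k) := by
    exact (Finset.add_sum_erase Finset.univ
      (fun k : Fin n => (X (Sum.inl k) * X (Sum.inr k) : CPoly n)) (Finset.mem_univ j)).symm
  rw [h3] at h2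
  convert h2 using 1
  ring

theorem M_bound (hM : IsHermitianModule n M) {c : ℝ} (hc0 : 0 ≤ c)
    (hc : C (c : ℂ) - normZ n ∈ M) (p : MvPolynomial (Fin n) ℂ) :
    ∃ d : ℝ, C (d : ℂ) - hol n p * hermStar n (hol n p) ∈ M := by
  induction p using MvPolynomial.induction_on with
  | C a =>
    refine ⟨Complex.normSq a, ?_⟩
    rw [hol_C, hs_C, ← C_mul, Complex.mul_conj, sub_self]
    exact M_zero hM
  | add p q hp hq =>
    obtain ⟨d, hd⟩ := hp
    obtain ⟨e, he⟩ := hq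
    refine ⟨d + d + (e + e), ?_⟩
    have h := hM.2.2.1 _ (hM.2.2.1 _ (hM.2.2.1 _ hd _ hd) _ (hM.2.2.1 _ he _ he)) _
      (M_sq hM (p - q))
    convert h using 1
    simp only [map_add, map_sub, Complex.ofReal_add]
    ring
  | mul_X p j hp =>
    obtain ⟨d, hd⟩ := hp
    refine ⟨c * d, ?_⟩
    have h := hM.2.2.1 _ (M_sq_mul hM p (M_coord hM hc j)) _ (M_smul hM hc0 hd)
    convert h using 1
    simp only [map_mul, hol_X, hs_inl, Complex.ofReal_mul]
    ring

theorem monom_split (n : ℕ) (m : (Fin n ⊕ Fin n) →₀ ℕ) (a : ℂ) :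
    ∃ p q : MvPolynomial (Fin n) ℂ, monomial m a = hol n p * hermStar n (hol n q) := by
  induction m using Finsupp.induction_linear generalizing a with
  | zero => exact ⟨C a, 1, by simp [hol_C]⟩
  | add f g hf hg =>
    obtain ⟨p, q, h⟩ := hf a
    obtain ⟨p', q', h'⟩ := hg 1
    refine ⟨p * p', q * q', ?_⟩
    have : (monomial (f + g) a : CPoly n) = monomial f a * monomial g 1 := by
      rw [monomial_mul, mul_one]
    rw [this, h, h']
    simp only [map_mul]
    ring
  | single j k =>
    have : (monomial (Finsupp.single j k) a : CPoly n) = C a * X j ^ k := by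
      rw [C_mul_X_pow_eq_monomial]
    rw [this]
    cases j with
    | inl j => exact ⟨C a * X j ^ k, 1, by simp [hol_C, hol_X]⟩
    | inr j => exact ⟨C a, X j ^ k, by simp [hol_C, hol_X, hs_inl]⟩

theorem M_real (hM : IsHermitianModule n M) {c : ℝ} (hc0 : 0 ≤ c)
    (hc : C (c : ℂ) - normZ n ∈ M) (f : CPoly n) :
    ∃ d : ℝ, C (d : ℂ) + (f + hermStar n f) ∈ M ∧ C (d : ℂ) - (f + hermStar n f) ∈ M := by
  induction f using MvPolynomial.induction_on' with
  | monomial m a =>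
    obtain ⟨p, q, h⟩ := monom_split n m a
    rw [h]
    obtain ⟨d, hd⟩ := M_bound hM hc0 hc p
    obtain ⟨e, he⟩ := M_bound hM hc0 hc q
    refine ⟨d + e, ?_, ?_⟩
    · convert hM.2.2.1 _ (hM.2.2.1 _ hd _ he) _ (M_sq hM (p + q)) using 1
      simp only [map_add, map_mul, hs_hs, Complex.ofReal_add]
      ring
    · convert hM.2.2.1 _ (hM.2.2.1 _ hd _ he) _ (M_sq hM (p - q)) using 1
      simp only [map_add, map_sub, map_mul, hs_hs, Complex.ofReal_add]
      ring
  | add f g hf hg =>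
    obtain ⟨d, h1, h2⟩ := hf
    obtain ⟨e, h3, h4⟩ := hg
    refine ⟨d + e, ?_, ?_⟩
    · convert hM.2.2.1 _ h1 _ h3 using 1
      simp only [map_add, Complex.ofReal_add]
      ring
    · convert hM.2.2.1 _ h2 _ h4 using 1
      simp only [map_add, Complex.ofReal_add]
      ring

end

/-- Lemma `archhermmod`: a hermitian module `M ⊆ ℝ[x,y]` is archimedean iff
`c - ‖z‖² ∈ M` for some real `c`. -/
theorem statement12 (n : ℕ) (hn : 0 < n) (M : Set (CPoly n))
    (hM : IsHermitianModule n M) :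
    IsArchSet n M ↔ ∃ c : ℝ, C (c : ℂ) - normZ n ∈ M := by
  constructor
  · intro h
    obtain ⟨c, -, hc⟩ := h (normZ n) (by
      simp only [normZ, map_sum, map_mul, hs_inl, hs_inr, mul_comm])
    exact ⟨c, hc⟩
  · rintro ⟨c, hc⟩ f hf
    have hc' : C ((|c| : ℝ) : ℂ) - normZ n ∈ M := by
      convert hM.2.2.1 _ hc _ (M_const hM (sub_nonneg.2 (le_abs_self c))) using 1
      simp only [map_sub, Complex.ofReal_sub]
      ring
    obtain ⟨d, h1, h2⟩ := M_real hM (abs_nonneg c) hc' (C (1 / 2 : ℂ) * f)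
    have e : C (1 / 2 : ℂ) * f + hermStar n (C (1 / 2 : ℂ) * f) = f := by
      rw [map_mul, hf, hs_C, ← add_mul, ← C_add]
      have : (1 / 2 : ℂ) + (starRingEnd ℂ) (1 / 2) = 1 := by
        rw [map_div₀, map_one, Complex.conj_ofNat]
        norm_num
      rw [this, C_1, one_mul]
    rw [e] at h1 h2
    exact ⟨d, h1, h2⟩

end
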